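/- Let ω = e^{2πi/3}, θ₁ = 2cos(2π/7), θ₂ = θ₁² − 2 = 2cos(4π/7), θ₃ = θ₂² − 2 = 2cos(8π/7), all in ℂ. For ℓ ∈ {0, 1, 2} and a_ℓ, b_ℓ, c_ℓ ∈ ℤ[ω], set x_ℓ = a_ℓ + b_ℓθ₁ + c_ℓθ₁², σ(x_ℓ) = a_ℓ + b_ℓθ₂ + c_ℓθ₂², σ²(x_ℓ) = a_ℓ + b_ℓθ₃ + c_ℓθ₃². If not all a_ℓ, b_ℓ, c_ℓ are zero, then the determinant of the 3×3 complex matrix [[x₀, x₁, x₂], [ω·σ(x₂), σ(x₀), σ(x₁)], [ω·σ²(x₁), ω·σ²(x₂), σ²(x₀)]] is a nonzero element of ℤ[ω]; in particular its squared modulus is at least 1. (This is the full-diversity / non-vanishing determinant property of the 3×3 perfect space-time code built on the cyclic division algebra (ℚ(ω, θ₁)/ℚ(ω), σ, ω).) -/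

import Mathlib

noncomputable section

open Complex

/-- `ω = e^{2πi/3}`, the primitive cube root of unity. -/
def om : ℂ := Complex.exp (2 * Real.pi * Complex.I / 3)

/-- `θ₁ = 2cos(2π/7)`. -/
def t1 : ℂ := 2 * Real.cos (2 * Real.pi / 7)

/-- `θ₂ = θ₁² − 2 = 2cos(4π/7)`. -/
def t2 : ℂ := t1 ^ 2 - 2

/-- `θ₃ = θ₂² − 2 = 2cos(8π/7)`. -/
def t3 : ℂ := t2 ^ 2 - 2

/-- The Eisenstein integer `p.1 + p.2·ω` as a complex number. -/
def E (p : ℤ × ℤ) : ℂ := (p.1 : ℂ) + (p.2 : ℂ) * om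

/-- The conjugates of the layer elements:
`X a b c ℓ t = a_ℓ + b_ℓ·t + c_ℓ·t²` evaluated at `t ∈ {θ₁, θ₂, θ₃}`. -/
def X (a b c : Fin 3 → ℤ × ℤ) (ℓ : Fin 3) (t : ℂ) : ℂ :=
  E (a ℓ) + E (b ℓ) * t + E (c ℓ) * t ^ 2

/-- The codeword matrix of the `3×3` perfect space-time code built on the cyclic
division algebra `(ℚ(ω,θ₁)/ℚ(ω), σ, ω)` determined by the coefficients `a b c`. -/
def M3 (a b c : Fin 3 → ℤ × ℤ) : Matrix (Fin 3) (Fin 3) ℂ :=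
  !![X a b c 0 t1, X a b c 1 t1, X a b c 2 t1;
     om * X a b c 2 t2, X a b c 0 t2, X a b c 1 t2;
     om * X a b c 1 t3, om * X a b c 2 t3, X a b c 0 t3]

/-!
Let `S = ℤ[ω][θ]` with `θ³ + θ² - 2θ - 1 = 0`. The prime `ω - 2` of `ℤ[ω]`, which has norm `7`, is
totally ramified in `S`: the prime above it is generated by `ϖ = θ - ω`, its residue field is `𝔽₇`,
and `σ` acts trivially modulo `ϖ`. There the code matrix becomes the matrix of multiplication by
`x̄₀ + x̄₁ α + x̄₂ α²` in `𝔽₇[α]`, where `α³` is the residue of `ω`. That residue is `2`, not a cube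
modulo `7`, so `𝔽₇[α]` is a field. A vanishing determinant therefore forces `ϖ` to divide every
`x_ℓ`, and dividing it out leaves the determinant zero; by infinite descent and Krull's intersection
theorem all `x_ℓ` vanish. Moreover `σ` only conjugates the code matrix, so the determinant is fixed
by `σ` and lies in `ℤ[ω]`, whose nonzero elements have norm at least `1`.
-/

section CyclicMatrix

variable {n : ℕ} {S T : Type*} [CommRing S] [CommRing T]

/-- The matrix of right multiplication by `∑ k, x k * e ^ k` on the cyclic algebra `⨁ i, S * e ^ i`
with `e * s = σ s * e` and `e ^ n = γ`, in the left `S`-basis `1, e, …, e ^ (n - 1)`. The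
subtraction `j - i` is modulo `n`, and an entry with `j < i` has wrapped around once, which
contributes the factor `γ`. -/
def cyclicMatrix (σ : S →+* S) (γ : S) (x : Fin n → S) : Matrix (Fin n) (Fin n) S :=
  Matrix.of fun i j => (if j < i then γ else 1) * σ^[i] (x (j - i))

theorem mapMatrix_cyclicMatrix {σ : S →+* S} {τ : T →+* T} {π : S →+* T}
    (h : Function.Semiconj π σ τ) (γ : S) (x : Fin n → S) :
    π.mapMatrix (cyclicMatrix σ γ x) = cyclicMatrix τ (π γ) (π ∘ x) := by
  ext i j
  simp [cyclicMatrix, apply_ite π, (h.iterate_right i).eq]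

theorem cyclicMatrix_smul (σ : S →+* S) (γ s : S) (x : Fin n → S) :
    cyclicMatrix σ γ (s • x) =
      Matrix.diagonal (fun i : Fin n => σ^[i] s) * cyclicMatrix σ γ x := by
  ext i j
  simp only [cyclicMatrix, Matrix.of_apply, Matrix.diagonal_mul, Pi.smul_apply, smul_eq_mul,
    iterate_map_mul]
  ring

theorem det_cyclicMatrix_smul (σ : S →+* S) (γ s : S) (x : Fin n → S) :
    (cyclicMatrix σ γ (s • x)).det = (∏ i : Fin n, σ^[i] s) * (cyclicMatrix σ γ x).det := by
  rw [cyclicMatrix_smul, Matrix.det_mul, Matrix.det_diagonal]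

-- Applying `σ` to the entries amounts to conjugating by `e`.
theorem mapMatrix_self_cyclicMatrix_mul_diagonal {m : ℕ} {σ : S →+* S}
    (hσ : ∀ s, σ^[m + 1] s = s) {γ : S} (hγ : σ γ = γ) (x : Fin (m + 1) → S) :
    σ.mapMatrix (cyclicMatrix σ γ x) * Matrix.diagonal (fun j => if j = Fin.last m then γ else 1) =
      Matrix.diagonal (fun i => if i = Fin.last m then γ else 1) *
        (cyclicMatrix σ γ x).submatrix (Equiv.addRight 1) (Equiv.addRight 1) := by
  ext i j
  simp only [RingHom.mapMatrix_apply, Matrix.mul_diagonal, Matrix.map_apply, cyclicMatrix,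
    Matrix.of_apply, Matrix.diagonal_mul, Matrix.submatrix_apply, Equiv.coe_addRight, map_mul,
    apply_ite σ, map_one, hγ, ← Function.iterate_succ_apply' σ, add_sub_add_right_eq_sub,
    Fin.lt_def, Fin.val_add_one]
  rcases eq_or_ne i (Fin.last m) with rfl | hi <;> rcases eq_or_ne j (Fin.last m) with rfl | hj
  · simp [-Function.iterate_succ, hσ, mul_comm]
  · simp [-Function.iterate_succ, hσ, hj, Fin.val_lt_last hj]
  · simp [-Function.iterate_succ, hi, mul_comm, i.is_le]
  · simp [hi, hj]

theorem map_det_cyclicMatrix [NeZero n] {σ : S →+* S} (hσ : ∀ s, σ^[n] s = s) {γ : S}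
    (hγ : σ γ = γ) (hγreg : IsLeftRegular γ) (x : Fin n → S) :
    σ (cyclicMatrix σ γ x).det = (cyclicMatrix σ γ x).det := by
  obtain ⟨m, rfl⟩ := Nat.exists_eq_succ_of_ne_zero (NeZero.ne n)
  have key := congrArg Matrix.det (mapMatrix_self_cyclicMatrix_mul_diagonal hσ hγ x)
  rw [Matrix.det_mul, Matrix.det_mul, Matrix.det_submatrix_equiv_self, ← RingHom.map_det,
    Matrix.det_diagonal, Finset.prod_ite_eq' _ _ fun _ => γ, if_pos (Finset.mem_univ _),
    mul_comm] at key
  exact hγreg key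

theorem cyclicMatrix_id_mulVec_pow [NeZero n] {γ α : S} (hα : α ^ n = γ) (v : Fin n → S) :
    (cyclicMatrix (RingHom.id S) γ v).mulVec (fun j => α ^ (j : ℕ)) =
      (∑ k, v k * α ^ (k : ℕ)) • fun i : Fin n => α ^ (i : ℕ) := by
  have hpow (i j : Fin n) :
      (if j < i then γ else 1) * α ^ (j : ℕ) = α ^ ((j - i : Fin n) : ℕ) * α ^ (i : ℕ) := by
    split_ifs with hji
    · rw [← hα, ← pow_add, ← pow_add, Fin.coe_sub_iff_lt.2 hji]
      congr 1
      omega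
    · rw [one_mul, ← pow_add, Fin.coe_sub_iff_le.2 (not_lt.1 hji)]
      congr 1
      omega
  ext i
  calc (cyclicMatrix (RingHom.id S) γ v).mulVec (fun j => α ^ (j : ℕ)) i
      = ∑ j, v (j - i) * α ^ ((j - i : Fin n) : ℕ) * α ^ (i : ℕ) := by
        simp only [Matrix.mulVec, dotProduct, cyclicMatrix, Matrix.of_apply, RingHom.coe_id,
          Function.iterate_id, id_eq]
        exact Finset.sum_congr rfl fun j _ => by linear_combination v (j - i) * hpow i j
    _ = ∑ k, v k * α ^ (k : ℕ) * α ^ (i : ℕ) :=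
        (Equiv.subRight i).sum_comp fun k => v k * α ^ (k : ℕ) * α ^ (i : ℕ)
    _ = _ := by simp [Finset.sum_mul]

theorem vecMul_cyclicMatrix_id_dotProduct_pow [NeZero n] {γ α : S} (hα : α ^ n = γ)
    (v w : Fin n → S) :
    dotProduct (Matrix.vecMul w (cyclicMatrix (RingHom.id S) γ v)) (fun j => α ^ (j : ℕ)) =
      (∑ k, v k * α ^ (k : ℕ)) * ∑ k, w k * α ^ (k : ℕ) := by
  rw [← Matrix.dotProduct_mulVec, cyclicMatrix_id_mulVec_pow hα, dotProduct_smul, smul_eq_mul]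
  rfl

end CyclicMatrix

section PowBasis

open Polynomial hiding X

variable {n : ℕ} {R : Type*} [CommRing R] {f : R[X]}

/-- The basis `1, α, …, α ^ (n - 1)` of `R[α]`, for `α` a root of a monic `f` of degree `n`. -/
def adjoinRootPowBasis (hf : f.Monic) (hn : f.natDegree = n) :
    Module.Basis (Fin n) R (AdjoinRoot f) :=
  (AdjoinRoot.powerBasis' hf).basis.reindex (finCongr hn)

theorem adjoinRootPowBasis_apply (hf : f.Monic) (hn : f.natDegree = n) (k : Fin n) :
    adjoinRootPowBasis hf hn k = AdjoinRoot.root f ^ (k : ℕ) := by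
  simp [adjoinRootPowBasis, finCongr]

theorem eq_zero_of_sum_of_mul_root_pow_eq_zero (hf : f.Monic) (hn : f.natDegree = n)
    {w : Fin n → R} (hw : ∑ k, AdjoinRoot.of f (w k) * AdjoinRoot.root f ^ (k : ℕ) = 0) :
    w = 0 := by
  refine funext <| Fintype.linearIndependent_iff.1 (adjoinRootPowBasis hf hn).linearIndependent w ?_
  simpa only [adjoinRootPowBasis_apply, Algebra.smul_def, AdjoinRoot.algebraMap_eq] using hw

theorem exists_eq_sum_of_mul_root_pow (hf : f.Monic) (hn : f.natDegree = n) (s : AdjoinRoot f) :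
    ∃ w : Fin n → R, s = ∑ k, AdjoinRoot.of f (w k) * AdjoinRoot.root f ^ (k : ℕ) := by
  refine ⟨(adjoinRootPowBasis hf hn).repr s, ?_⟩
  simpa only [adjoinRootPowBasis_apply, Algebra.smul_def, AdjoinRoot.algebraMap_eq] using
    ((adjoinRootPowBasis hf hn).sum_repr s).symm

theorem root_sub_of_dvd_mk_sub_of_eval (r : R) (p : R[X]) :
    AdjoinRoot.root f - AdjoinRoot.of f r ∣ AdjoinRoot.mk f p - AdjoinRoot.of f (p.eval r) := by
  simpa using map_dvd (AdjoinRoot.mk f) (X_sub_C_dvd_sub_C_eval (p := p) (a := r))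

theorem root_sub_of_dvd_of_eval (r : R) :
    AdjoinRoot.root f - AdjoinRoot.of f r ∣ AdjoinRoot.of f (f.eval r) := by
  simpa using root_sub_of_dvd_mk_sub_of_eval (f := f) r f

end PowBasis

section NonNorm

open Polynomial hiding X

variable {n : ℕ} {F : Type*} [Field F]

theorem eq_zero_of_det_cyclicMatrix_id_eq_zero (hn : n.Prime) {γ : F} (hγ : ∀ b, b ^ n ≠ γ)
    {v : Fin n → F} (hv : (cyclicMatrix (RingHom.id F) γ v).det = 0) : v = 0 := by
  have : NeZero n := ⟨hn.ne_zero⟩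
  have : Fact (Irreducible (Polynomial.X ^ n - C γ)) := ⟨X_pow_sub_C_irreducible_of_prime hn hγ⟩
  have hmonic : (Polynomial.X ^ n - C γ).Monic := monic_X_pow_sub_C γ hn.ne_zero
  have hdeg : (Polynomial.X ^ n - C γ).natDegree = n := natDegree_X_pow_sub_C
  set ι := AdjoinRoot.of (Polynomial.X ^ n - C γ)
  set α := AdjoinRoot.root (Polynomial.X ^ n - C γ)
  have hα : α ^ n = ι γ := by
    have := AdjoinRoot.eval₂_root (Polynomial.X ^ n - C γ)
    simpa [sub_eq_zero] using this
  obtain ⟨w, hw0, hw⟩ := Matrix.exists_vecMul_eq_zero_iff.2 hv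
  have hιw : Matrix.vecMul (ι ∘ w) (cyclicMatrix (RingHom.id _) (ι γ) (ι ∘ v)) = 0 := by
    rw [← mapMatrix_cyclicMatrix (σ := RingHom.id F) (π := ι) fun _ => rfl]
    ext j
    rw [RingHom.mapMatrix_apply, ← RingHom.map_vecMul, hw, Pi.zero_apply, map_zero, Pi.zero_apply]
  have hprod := vecMul_cyclicMatrix_id_dotProduct_pow hα (ι ∘ v) (ι ∘ w)
  rw [hιw, zero_dotProduct] at hprod
  rcases mul_eq_zero.1 hprod.symm with h | h
  · exact eq_zero_of_sum_of_mul_root_pow_eq_zero hmonic hdeg h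
  · exact absurd (eq_zero_of_sum_of_mul_root_pow_eq_zero hmonic hdeg h) hw0

end NonNorm

section Descent

theorem prod_iterate_dvd_pow {n : ℕ} {S : Type*} [CommRing S] {σ : S →+* S}
    (hσ : ∀ s, σ^[n] s = s) {ϖ : S} (hϖ : ϖ ∣ σ ϖ) : ∏ i : Fin n, σ^[i] ϖ ∣ ϖ ^ n := by
  have dvd_iterate (k : ℕ) : ϖ ∣ σ^[k] ϖ := by
    induction k with
    | zero => exact dvd_rfl
    | succ k ih => rw [Function.iterate_succ_apply']; exact hϖ.trans (map_dvd σ ih)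
  have iterate_dvd (i : Fin n) : σ^[i] ϖ ∣ ϖ := by
    have := map_dvd (σ ^ (i : ℕ)) (dvd_iterate (n - i))
    rwa [RingHom.coe_pow, ← Function.iterate_add_apply, Nat.add_sub_cancel' i.is_le', hσ] at this
  simpa using Finset.prod_dvd_prod_of_dvd (s := Finset.univ) _ _ fun i _ => iterate_dvd i

theorem eq_zero_of_forall_algebraMap_pow_dvd {R S : Type*} [CommRing R] [IsDomain R]
    [IsNoetherianRing R] [CommRing S] [Algebra R S] [Module.Finite R S] [Module.IsTorsionFree R S]
    {ν : R} (hν : ¬ IsUnit ν) {s : S} (hs : ∀ k : ℕ, algebraMap R S ν ^ k ∣ s) : s = 0 := by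
  have krull := Ideal.iInf_pow_smul_eq_bot_of_isTorsionFree (I := Ideal.span {ν}) (M := S)
    (mt Ideal.span_singleton_eq_top.1 hν)
  rw [← Submodule.mem_bot R, ← krull, Submodule.mem_iInf]
  intro k
  obtain ⟨t, rfl⟩ := hs k
  rw [← map_pow, ← Algebra.smul_def]
  exact Submodule.smul_mem_smul (Ideal.pow_mem_pow (Ideal.mem_span_singleton_self ν) k) trivial

variable {n : ℕ} {R S F : Type*} [CommRing R] [IsDomain R] [CommRing S] [Algebra R S]
  [Module.IsTorsionFree R S] [Field F]
  {σ : S →+* S} {π : S →+* F} {γ ϖ : S} {ν : R}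

theorem exists_eq_smul_of_det_cyclicMatrix_eq_zero (hn : n.Prime) (hπσ : ∀ s, π (σ s) = π s)
    (hker : RingHom.ker π = Ideal.span {ϖ}) (hν : ∏ i : Fin n, σ^[i] ϖ = algebraMap R S ν)
    (hν0 : ν ≠ 0) (hγ : ∀ b, b ^ n ≠ π γ) {x : Fin n → S} (hx : (cyclicMatrix σ γ x).det = 0) :
    ∃ y : Fin n → S, x = ϖ • y ∧ (cyclicMatrix σ γ y).det = 0 := by
  have hπx : π ∘ x = 0 := by
    refine eq_zero_of_det_cyclicMatrix_id_eq_zero hn hγ ?_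
    rw [← mapMatrix_cyclicMatrix (σ := σ) (τ := RingHom.id F) hπσ, ← RingHom.map_det, hx, map_zero]
  have hdvd (i : Fin n) : ϖ ∣ x i := by
    rw [← Ideal.mem_span_singleton, ← hker]
    exact congrFun hπx i
  choose y hy using hdvd
  obtain rfl : x = ϖ • y := funext hy
  refine ⟨y, rfl, ?_⟩
  rw [det_cyclicMatrix_smul, hν, ← Algebra.smul_def] at hx
  exact (smul_eq_zero_iff_right hν0).1 hx

theorem pow_dvd_of_det_cyclicMatrix_eq_zero (hn : n.Prime) (hπσ : ∀ s, π (σ s) = π s)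
    (hker : RingHom.ker π = Ideal.span {ϖ}) (hν : ∏ i : Fin n, σ^[i] ϖ = algebraMap R S ν)
    (hν0 : ν ≠ 0) (hγ : ∀ b, b ^ n ≠ π γ) (k : ℕ) {x : Fin n → S}
    (hx : (cyclicMatrix σ γ x).det = 0) (i : Fin n) : ϖ ^ k ∣ x i := by
  induction k generalizing x with
  | zero => simp
  | succ k ih =>
    obtain ⟨y, rfl, hy⟩ := exists_eq_smul_of_det_cyclicMatrix_eq_zero hn hπσ hker hν hν0 hγ hx
    rw [pow_succ']
    exact mul_dvd_mul_left ϖ (ih hy)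

theorem det_cyclicMatrix_ne_zero [IsNoetherianRing R] [Module.Finite R S] (hn : n.Prime)
    (hσ : ∀ s, σ^[n] s = s) (hπσ : ∀ s, π (σ s) = π s)
    (hker : RingHom.ker π = Ideal.span {ϖ}) (hν : ∏ i : Fin n, σ^[i] ϖ = algebraMap R S ν)
    (hν0 : ν ≠ 0) (hγ : ∀ b, b ^ n ≠ π γ) {x : Fin n → S} (hx : x ≠ 0) :
    (cyclicMatrix σ γ x).det ≠ 0 := by
  have hπϖ : π ϖ = 0 := by
    rw [← RingHom.mem_ker, hker]
    exact Ideal.mem_span_singleton_self ϖ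
  have hϖσ : ϖ ∣ σ ϖ := by rw [← Ideal.mem_span_singleton, ← hker, RingHom.mem_ker, hπσ, hπϖ]
  have hνϖ : algebraMap R S ν ∣ ϖ ^ n := hν ▸ prod_iterate_dvd_pow hσ hϖσ
  have hϖν : ϖ ∣ algebraMap R S ν :=
    hν ▸ Finset.dvd_prod_of_mem (fun i : Fin n => σ^[i] ϖ) (Finset.mem_univ (⟨0, hn.pos⟩ : Fin n))
  have hν_unit : ¬ IsUnit ν := fun hu =>
    ((isUnit_of_dvd_unit hϖν (hu.map _)).map π).ne_zero hπϖ
  intro hdet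
  refine hx <| funext fun i => eq_zero_of_forall_algebraMap_pow_dvd hν_unit fun k => ?_
  calc algebraMap R S ν ^ k ∣ (ϖ ^ n) ^ k := pow_dvd_pow_of_dvd hνϖ k
    _ = ϖ ^ (n * k) := (pow_mul ϖ n k).symm
    _ ∣ x i := pow_dvd_of_det_cyclicMatrix_eq_zero hn hπσ hker hν hν0 hγ (n * k) hdet i

end Descent

section Heptagon

open Polynomial hiding X

/-- The minimal polynomial over `ℚ` of `2cos(2π/7)`, with coefficients read in `R`. -/
def heptagonCubic (R : Type*) [CommRing R] : R[X] :=
  Polynomial.X ^ 3 + Polynomial.X ^ 2 - 2 * Polynomial.X - 1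

/-- The ring `R[θ]` with `θ = 2cos(2π/7)` adjoined formally; for `R = ℤ[ω]` this is `O_L`. -/
abbrev HeptagonRing (R : Type*) [CommRing R] : Type _ := AdjoinRoot (heptagonCubic R)

variable (R : Type*) [CommRing R]

theorem natDegree_heptagonCubic [Nontrivial R] : (heptagonCubic R).natDegree = 3 := by
  unfold heptagonCubic
  compute_degree!

theorem monic_heptagonCubic : (heptagonCubic R).Monic := by
  unfold heptagonCubic
  monicity!

variable {R}

theorem eval₂_heptagonCubic {S : Type*} [CommRing S] (i : R →+* S) (s : S) :
    (heptagonCubic R).eval₂ i s = s ^ 3 + s ^ 2 - 2 * s - 1 := by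
  simp [heptagonCubic]

theorem eval_heptagonCubic (r : R) : (heptagonCubic R).eval r = r ^ 3 + r ^ 2 - 2 * r - 1 := by
  simp [heptagonCubic]

instance : Module.Finite R (HeptagonRing R) := (monic_heptagonCubic R).finite_adjoinRoot

instance : Module.Free R (HeptagonRing R) := (monic_heptagonCubic R).free_adjoinRoot

/-- The adjoined element `θ`. -/
def heptagonRoot : HeptagonRing R := AdjoinRoot.root (heptagonCubic R)

theorem heptagonRoot_cubic :
    (heptagonRoot : HeptagonRing R) ^ 3 + heptagonRoot ^ 2 - 2 * heptagonRoot - 1 = 0 := by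
  rw [← eval₂_heptagonCubic (AdjoinRoot.of _)]
  exact AdjoinRoot.eval₂_root _

variable (R) in
/-- The `R`-algebra endomorphism `σ` of `R[θ]` with `σ(θ) = θ² - 2`. -/
def heptagonConj : HeptagonRing R →+* HeptagonRing R :=
  AdjoinRoot.lift (AdjoinRoot.of _) (heptagonRoot ^ 2 - 2) <| by
    rw [eval₂_heptagonCubic]
    -- `f(t² - 2) = -f(t) f(-t)`
    linear_combination (heptagonRoot ^ 3 - heptagonRoot ^ 2 - 2 * heptagonRoot + 1) *
      heptagonRoot_cubic (R := R)

@[simp]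
theorem heptagonConj_of (r : R) :
    heptagonConj R (AdjoinRoot.of _ r) = AdjoinRoot.of _ r :=
  AdjoinRoot.lift_of _

@[simp]
theorem heptagonConj_root : heptagonConj R heptagonRoot = heptagonRoot ^ 2 - 2 :=
  AdjoinRoot.lift_root _

theorem heptagonConj_heptagonConj_root :
    heptagonConj R (heptagonConj R heptagonRoot) = 1 - heptagonRoot - heptagonRoot ^ 2 := by
  simp only [heptagonConj_root, map_sub, map_pow, map_ofNat]
  linear_combination (heptagonRoot - 1) * heptagonRoot_cubic (R := R)

theorem heptagonConj_iterate_three (s : HeptagonRing R) : (heptagonConj R)^[3] s = s := by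
  suffices h : heptagonConj R ^ 3 = RingHom.id _ by
    rw [← RingHom.coe_pow, h, RingHom.id_apply]
  refine AdjoinRoot.ringHom_ext (RingHom.ext fun r => ?_) ?_
  · simp
  · change heptagonConj R (heptagonConj R (heptagonConj R heptagonRoot)) = heptagonRoot
    rw [heptagonConj_heptagonConj_root]
    simp only [heptagonConj_root, map_sub, map_pow, map_one]
    linear_combination (1 - heptagonRoot) * heptagonRoot_cubic (R := R)

theorem exists_eq_of_of_heptagonConj_eq_self [Nontrivial R] (h3 : IsLeftRegular (3 : R))
    {s : HeptagonRing R} (hs : heptagonConj R s = s) : ∃ r, s = AdjoinRoot.of _ r := by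
  obtain ⟨w, hw⟩ :=
    exists_eq_sum_of_mul_root_pow (monic_heptagonCubic R) (natDegree_heptagonCubic R) s
  have hdiff : ∑ k : Fin 3, AdjoinRoot.of (heptagonCubic R)
      (![3 * w 2 - 2 * w 1, - w 1 - w 2, w 1 - 2 * w 2] k) * heptagonRoot ^ (k : ℕ) = 0 := by
    rw [← sub_eq_zero.2 hs, hw]
    change _ = heptagonConj R (∑ k : Fin 3, AdjoinRoot.of _ (w k) * heptagonRoot ^ (k : ℕ)) -
      ∑ k : Fin 3, AdjoinRoot.of _ (w k) * heptagonRoot ^ (k : ℕ)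
    simp only [Fin.sum_univ_three, Matrix.cons_val_zero, Matrix.cons_val_one, Matrix.cons_val,
      Fin.val_zero, Fin.val_one, Fin.val_two, pow_zero, pow_one, map_sub, map_add, map_mul, map_neg,
      map_pow, map_one, map_ofNat, heptagonConj_of, heptagonConj_root]
    linear_combination
      AdjoinRoot.of (heptagonCubic R) (w 2) * (1 - heptagonRoot) * heptagonRoot_cubic (R := R)
  have hzero := eq_zero_of_sum_of_mul_root_pow_eq_zero (monic_heptagonCubic R)
    (natDegree_heptagonCubic R) hdiff
  have h1 : - w 1 - w 2 = 0 := congrFun hzero 1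
  have h2 : w 1 - 2 * w 2 = 0 := congrFun hzero 2
  have hw2 : w 2 = 0 := h3 <| by linear_combination - h1 - h2
  have hw1 : w 1 = 0 := by linear_combination - h1 - hw2
  exact ⟨w 0, by simp [hw, Fin.sum_univ_three, hw1, hw2]⟩

theorem prod_heptagonConj_iterate_root_sub_of (r : R) :
    ∏ i : Fin 3, (heptagonConj R)^[i] (heptagonRoot - AdjoinRoot.of _ r) =
      AdjoinRoot.of _ (-(heptagonCubic R).eval r) := by
  simp only [Fin.prod_univ_three, Fin.val_zero, Fin.val_one, Fin.val_two, Function.iterate_succ,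
    Function.iterate_zero, Function.comp_apply, id_eq, map_sub, heptagonConj_of,
    heptagonConj_heptagonConj_root, eval_heptagonCubic]
  simp only [heptagonConj_root, map_neg, map_sub, map_add, map_mul, map_pow, map_one, map_ofNat]
  linear_combination (1 - heptagonRoot ^ 2 + AdjoinRoot.of _ r * heptagonRoot) *
    heptagonRoot_cubic (R := R)

end Heptagon

section Eisenstein

/-- The Eisenstein integers `ℤ[ω]`, encoded as pairs `(re, im)` standing for `re + im * ω` with
`ω² = -1 - ω`. -/
abbrev EisensteinInt : Type := QuadraticAlgebra ℤ (-1) (-1)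

open QuadraticAlgebra (omega)

theorem om_sq_add_om_add_one : om ^ 2 + om + 1 = 0 := by
  have hprim : IsPrimitiveRoot om 3 := by
    simpa [om] using Complex.isPrimitiveRoot_exp 3 three_ne_zero
  have hsum := hprim.geom_sum_eq_zero (by norm_num)
  simp only [Finset.sum_range_succ, Finset.sum_range_zero] at hsum
  linear_combination hsum

theorem om_eq_exp_ofReal_mul_I : om = Complex.exp ((2 * Real.pi / 3 : ℝ) * I) := by
  rw [om]
  push_cast
  ring_nf

theorem om_re : om.re = -1 / 2 := by
  rw [om_eq_exp_ofReal_mul_I, Complex.exp_ofReal_mul_I_re,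
    show 2 * Real.pi / 3 = Real.pi - Real.pi / 3 by ring, Real.cos_pi_sub, Real.cos_pi_div_three]
  norm_num

theorem normSq_om : Complex.normSq om = 1 := by
  rw [Complex.normSq_eq_norm_sq, om_eq_exp_ofReal_mul_I, Complex.norm_exp_ofReal_mul_I, one_pow]

/-- The embedding of `ℤ[ω]` into `ℂ`. -/
def eisensteinToComplex : EisensteinInt →+* ℂ :=
  (QuadraticAlgebra.lift ⟨om, by
    simp only [neg_smul, one_smul]
    linear_combination om_sq_add_om_add_one⟩ : EisensteinInt →ₐ[ℤ] ℂ).toRingHom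

theorem eisensteinToComplex_apply (z : EisensteinInt) :
    eisensteinToComplex z = E (z.re, z.im) := by
  simp [eisensteinToComplex, QuadraticAlgebra.lift, E]

theorem normSq_eisensteinToComplex (z : EisensteinInt) :
    Complex.normSq (eisensteinToComplex z) = (z.norm : ℝ) := by
  have him : om.im * om.im = 1 - om.re * om.re := by
    linear_combination (Complex.normSq_apply om).symm.trans normSq_om
  rw [om_re] at him
  simp only [eisensteinToComplex_apply, E, Complex.normSq_apply, QuadraticAlgebra.norm_def, om_re,
    add_re, add_im, mul_re, mul_im, intCast_re, intCast_im]
  push_cast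
  linear_combination (z.im : ℝ) ^ 2 * him

theorem eisensteinInt_norm_pos {z : EisensteinInt} (hz : z ≠ 0) : 0 < z.norm := by
  by_contra! hle
  rw [QuadraticAlgebra.norm_def] at hle
  have him : z.im = 0 := by nlinarith [sq_nonneg (2 * z.re - z.im)]
  have hre : z.re = 0 := by nlinarith
  exact hz (QuadraticAlgebra.ext hre him)

theorem one_le_normSq_eisensteinToComplex {z : EisensteinInt} (hz : z ≠ 0) :
    1 ≤ Complex.normSq (eisensteinToComplex z) := by
  rw [normSq_eisensteinToComplex]
  exact_mod_cast eisensteinInt_norm_pos hz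

theorem eisensteinToComplex_injective : Function.Injective eisensteinToComplex := by
  rw [injective_iff_map_eq_zero]
  intro z hz
  by_contra hne
  have := one_le_normSq_eisensteinToComplex hne
  norm_num [hz] at this

instance : IsDomain EisensteinInt := eisensteinToComplex_injective.isDomain _

instance : IsNoetherianRing EisensteinInt := IsNoetherianRing.of_finite ℤ _

/-- Reduction of `ℤ[ω]` modulo the prime `ω - 2` of norm `7`. -/
def eisensteinToZModSeven : EisensteinInt →+* ZMod 7 :=
  (QuadraticAlgebra.lift ⟨2, by decide⟩ : EisensteinInt →ₐ[ℤ] ZMod 7).toRingHom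

theorem eisensteinToZModSeven_apply (z : EisensteinInt) :
    eisensteinToZModSeven z = z.re + z.im * 2 := by
  simp [eisensteinToZModSeven, QuadraticAlgebra.lift]

theorem omega_sub_two_dvd_of_eisensteinToZModSeven_eq_zero {z : EisensteinInt}
    (hz : eisensteinToZModSeven z = 0) : omega - 2 ∣ z := by
  have hmod : ((z.re + z.im * 2 : ℤ) : ZMod 7) = 0 := by
    rw [← hz, eisensteinToZModSeven_apply]
    push_cast
    rfl
  obtain ⟨k, hk⟩ := (ZMod.intCast_zmod_eq_zero_iff_dvd _ 7).1 hmod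
  push_cast at hk
  -- `z = 7k + z.im * (ω - 2)` and `7 = (ω - 2) * (-3 - ω)`
  refine ⟨⟨z.im - 3 * k, -k⟩, ?_⟩
  ext <;> simp only [QuadraticAlgebra.re_mul, QuadraticAlgebra.im_mul, QuadraticAlgebra.re_sub,
    QuadraticAlgebra.im_sub, QuadraticAlgebra.omega_re, QuadraticAlgebra.omega_im,
    QuadraticAlgebra.re_ofNat, QuadraticAlgebra.im_ofNat] <;> linarith

end Eisenstein

section PerfectCode

open QuadraticAlgebra (omega)

theorem t1_cubic : t1 ^ 3 + t1 ^ 2 - 2 * t1 - 1 = 0 := by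
  have hζ : IsPrimitiveRoot (Complex.exp (2 * Real.pi * I / 7)) 7 := by
    simpa using Complex.isPrimitiveRoot_exp 7 (by norm_num)
  have ht1 : t1 = Complex.exp (2 * Real.pi * I / 7) + (Complex.exp (2 * Real.pi * I / 7))⁻¹ := by
    rw [t1, Complex.ofReal_cos, Complex.two_cos, ← Complex.exp_neg]
    push_cast
    ring_nf
  rw [ht1]
  generalize Complex.exp (2 * Real.pi * I / 7) = ζ at hζ
  have hζ0 : ζ ≠ 0 := hζ.ne_zero (by norm_num)
  have hsum := hζ.geom_sum_eq_zero (by norm_num)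
  simp only [Finset.sum_range_succ, Finset.sum_range_zero] at hsum
  field_simp
  linear_combination hsum

/-- The ring homomorphism `ℤ[ω][θ] → ℂ` extending the inclusion of `ℤ[ω]` and sending `θ` to
`2cos(2π/7)`. -/
def heptagonToComplex : HeptagonRing EisensteinInt →+* ℂ :=
  AdjoinRoot.lift eisensteinToComplex t1 <| by rw [eval₂_heptagonCubic, t1_cubic]

@[simp]
theorem heptagonToComplex_of (z : EisensteinInt) :
    heptagonToComplex (AdjoinRoot.of _ z) = eisensteinToComplex z :=
  AdjoinRoot.lift_of _

@[simp]
theorem heptagonToComplex_root : heptagonToComplex heptagonRoot = t1 :=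
  AdjoinRoot.lift_root _

/-- Reduction of `ℤ[ω][θ]` modulo the ramified prime `θ - ω` above `ω - 2`. -/
def heptagonResidue : HeptagonRing EisensteinInt →+* ZMod 7 :=
  AdjoinRoot.lift eisensteinToZModSeven 2 <| by rw [eval₂_heptagonCubic]; decide

@[simp]
theorem heptagonResidue_of (z : EisensteinInt) :
    heptagonResidue (AdjoinRoot.of _ z) = eisensteinToZModSeven z :=
  AdjoinRoot.lift_of _

@[simp]
theorem heptagonResidue_root : heptagonResidue heptagonRoot = 2 :=
  AdjoinRoot.lift_root _

theorem eisensteinToZModSeven_omega : eisensteinToZModSeven omega = 2 := by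
  simp [eisensteinToZModSeven_apply]

theorem heptagonResidue_heptagonConj (s : HeptagonRing EisensteinInt) :
    heptagonResidue (heptagonConj _ s) = heptagonResidue s := by
  suffices h : heptagonResidue.comp (heptagonConj _) = heptagonResidue from RingHom.congr_fun h s
  refine AdjoinRoot.ringHom_ext (RingHom.ext fun z => ?_) ?_
  · simp
  · change heptagonResidue (heptagonConj _ heptagonRoot) = heptagonResidue heptagonRoot
    simp only [heptagonConj_root, map_sub, map_pow, map_ofNat, heptagonResidue_root]
    decide

theorem omega_sq : (omega : EisensteinInt) ^ 2 = -1 - omega := by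
  rw [sq, QuadraticAlgebra.omega_mul_omega_eq_mk]
  ext <;> simp [QuadraticAlgebra.re_one, QuadraticAlgebra.im_one]

theorem eval_omega_heptagonCubic :
    (heptagonCubic EisensteinInt).eval omega = omega * (omega - 2) := by
  rw [eval_heptagonCubic]
  linear_combination (omega - 1) * omega_sq

theorem isUnit_omega : IsUnit (omega : EisensteinInt) :=
  IsUnit.of_mul_eq_one (-1 - omega) (by linear_combination -omega_sq)

theorem ker_heptagonResidue :
    RingHom.ker heptagonResidue = Ideal.span {heptagonRoot - AdjoinRoot.of _ omega} := by
  refine le_antisymm (fun s hs => ?_) ?_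
  · obtain ⟨p, rfl⟩ := AdjoinRoot.mk_surjective s
    have heval : eisensteinToZModSeven (p.eval omega) = 0 := by
      rw [← Polynomial.eval₂_at_apply, eisensteinToZModSeven_omega]
      exact (AdjoinRoot.lift_mk _ p).symm.trans hs
    have hdvd : (heptagonCubic EisensteinInt).eval omega ∣ p.eval omega := by
      rw [eval_omega_heptagonCubic, isUnit_omega.mul_left_dvd]
      exact omega_sub_two_dvd_of_eisensteinToZModSeven_eq_zero heval
    rw [Ideal.mem_span_singleton]
    exact (dvd_iff_dvd_of_dvd_sub (root_sub_of_dvd_mk_sub_of_eval omega p)).2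
      ((root_sub_of_dvd_of_eval omega).trans (map_dvd _ hdvd))
  · rw [Ideal.span_singleton_le_iff_mem, RingHom.mem_ker, map_sub, heptagonResidue_root,
      heptagonResidue_of, eisensteinToZModSeven_omega, sub_self]

/-- The layer elements `x_ℓ = a_ℓ + b_ℓ θ + c_ℓ θ²` of `ℤ[ω][θ]`. -/
def heptagonLayers (a b c : Fin 3 → ℤ × ℤ) (ℓ : Fin 3) : HeptagonRing EisensteinInt :=
  AdjoinRoot.of _ ⟨(a ℓ).1, (a ℓ).2⟩ + AdjoinRoot.of _ ⟨(b ℓ).1, (b ℓ).2⟩ * heptagonRoot +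
    AdjoinRoot.of _ ⟨(c ℓ).1, (c ℓ).2⟩ * heptagonRoot ^ 2

theorem eq_zero_of_heptagonLayers_eq_zero {a b c : Fin 3 → ℤ × ℤ} {ℓ : Fin 3}
    (h : heptagonLayers a b c ℓ = 0) : a ℓ = 0 ∧ b ℓ = 0 ∧ c ℓ = 0 := by
  let w : Fin 3 → EisensteinInt :=
    ![⟨(a ℓ).1, (a ℓ).2⟩, ⟨(b ℓ).1, (b ℓ).2⟩, ⟨(c ℓ).1, (c ℓ).2⟩]
  have hsum : ∑ k, AdjoinRoot.of _ (w k) * heptagonRoot ^ (k : ℕ) = 0 := by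
    simpa [Fin.sum_univ_three, w, heptagonLayers] using h
  have hw := eq_zero_of_sum_of_mul_root_pow_eq_zero (monic_heptagonCubic _)
    (natDegree_heptagonCubic _) hsum
  have pair_eq_zero {p : ℤ × ℤ} (hp : (⟨p.1, p.2⟩ : EisensteinInt) = 0) : p = 0 :=
    Prod.ext (congrArg QuadraticAlgebra.re hp) (congrArg QuadraticAlgebra.im hp)
  exact ⟨pair_eq_zero (congrFun hw 0), pair_eq_zero (congrFun hw 1), pair_eq_zero (congrFun hw 2)⟩

theorem M3_eq_mapMatrix_cyclicMatrix (a b c : Fin 3 → ℤ × ℤ) :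
    M3 a b c = heptagonToComplex.mapMatrix
      (cyclicMatrix (heptagonConj _) (AdjoinRoot.of _ omega) (heptagonLayers a b c)) := by
  have hω : eisensteinToComplex omega = om := by simp [eisensteinToComplex_apply, E]
  have neg_one : (-1 : Fin 3) = 2 := rfl
  have neg_two : (-2 : Fin 3) = 1 := rfl
  have one_sub_two : (1 - 2 : Fin 3) = 2 := rfl
  ext i j
  fin_cases i <;> fin_cases j <;>
    simp [M3, cyclicMatrix, heptagonLayers, X, t2, t3, hω, eisensteinToComplex_apply, map_ofNat,
      neg_one, neg_two, one_sub_two]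

theorem det_cyclicMatrix_heptagon_ne_zero {x : Fin 3 → HeptagonRing EisensteinInt} (hx : x ≠ 0) :
    (cyclicMatrix (heptagonConj _) (AdjoinRoot.of _ omega) x).det ≠ 0 := by
  have two_not_cube : ∀ b : ZMod 7, b ^ 3 ≠ 2 := by decide
  have : Fact (Nat.Prime 7) := ⟨by norm_num⟩
  refine det_cyclicMatrix_ne_zero (π := heptagonResidue) Nat.prime_three
    heptagonConj_iterate_three heptagonResidue_heptagonConj ker_heptagonResidue
    (prod_heptagonConj_iterate_root_sub_of omega) ?_ ?_ hx
  · rw [eval_omega_heptagonCubic, neg_ne_zero]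
    exact mul_ne_zero isUnit_omega.ne_zero fun h => by
      simpa [QuadraticAlgebra.im_ofNat] using congrArg QuadraticAlgebra.im h
  · rwa [heptagonResidue_of, eisensteinToZModSeven_omega]

theorem exists_det_cyclicMatrix_heptagon_eq_of (x : Fin 3 → HeptagonRing EisensteinInt) :
    ∃ z : EisensteinInt,
      (cyclicMatrix (heptagonConj _) (AdjoinRoot.of _ omega) x).det = AdjoinRoot.of _ z := by
  have three_ne_zero : (3 : EisensteinInt) ≠ 0 := fun h => by
    simpa [QuadraticAlgebra.re_ofNat] using congrArg QuadraticAlgebra.re h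
  exact exists_eq_of_of_heptagonConj_eq_self (IsRegular.of_ne_zero three_ne_zero).left
    (map_det_cyclicMatrix heptagonConj_iterate_three (heptagonConj_of omega)
      (isUnit_omega.map _).isRegular.left x)

end PerfectCode

/-- Full diversity / non-vanishing determinant of the `3×3` perfect space-time code:
if the Eisenstein-integer coefficients `a_ℓ, b_ℓ, c_ℓ` are not all zero, then the
determinant of the codeword matrix is a nonzero element of `ℤ[ω]`; in particular its
squared modulus is at least `1`. -/
theorem stmt14 (a b c : Fin 3 → ℤ × ℤ)
    (h : ¬ ∀ ℓ, a ℓ = 0 ∧ b ℓ = 0 ∧ c ℓ = 0) :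
    (∃ g : ℤ × ℤ, Matrix.det (M3 a b c) = E g) ∧
    Matrix.det (M3 a b c) ≠ 0 ∧
    1 ≤ Complex.normSq (Matrix.det (M3 a b c)) := by
  have hx : heptagonLayers a b c ≠ 0 := fun hx =>
    h fun ℓ => eq_zero_of_heptagonLayers_eq_zero (congrFun hx ℓ)
  obtain ⟨z, hz⟩ := exists_det_cyclicMatrix_heptagon_eq_of (heptagonLayers a b c)
  have hz0 : z ≠ 0 := by
    rintro rfl
    exact det_cyclicMatrix_heptagon_ne_zero hx (hz.trans (map_zero _))
  have hdet : (M3 a b c).det = eisensteinToComplex z := by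
    rw [M3_eq_mapMatrix_cyclicMatrix, ← RingHom.map_det, hz, heptagonToComplex_of]
  rw [hdet]
  exact ⟨⟨(z.re, z.im), eisensteinToComplex_apply z⟩,
    (map_ne_zero_iff _ eisensteinToComplex_injective).2 hz0,
    one_le_normSq_eisensteinToComplex hz0⟩
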